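/- Let e₁, e₂, e₃ be orthonormal vectors in E, let φ ∈ (0,π/2), and set v = sin φ e₂ + cos φ e₃. Then the curve ζ(t) = 2 sin φ cos φ (cosh(t/2) − 1) sinh(t/2) e₂ + 2(1 + cos²φ(cosh(t/2) − 1)) sinh(t/2) e₃ satisfies the Jacobi equation 4ζ''(t) − ζ(t) − 3⟨ζ(t),v⟩v = 0 for all t ∈ ℝ, with initial conditions ζ(0) = 0 and ζ'(0) = e₃. (This is the Jacobi field ζ_{F̄ξ} along a normal geodesic to W_w, written in the parallel frame (Z, P̄ξ, F̄ξ) with v representing Jξ.) -/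

import Mathlib

/- Context: `E` is a real inner product space with a fixed unit vector `v`
(representing `Jγ̇` in a parallel orthonormal frame along a unit-speed geodesic `γ`
of `ℂH^n` of constant holomorphic sectional curvature `−1`). A smooth curve
`ζ : ℝ → E` satisfies the Jacobi equation of `ℂH^n` if
`4ζ'' − ζ − 3⟨ζ,v⟩v = 0`. -/

open scoped RealInnerProductSpace
open Real

/- On the line `ℝ v` the Jacobi equation reads `ζ'' = ζ`, and on the orthogonal complement of `v`
it reads `4ζ'' = ζ`. The solution vanishing at `0` with initial velocity `w` is therefore `sinh t`
times the component of `w` along `v` plus `2 sinh (t / 2)` times its component orthogonal to `v`.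
For `w = e₃` the component along `v` is `cos φ • v`, and the half-angle formula for `sinh` turns
the solution into the stated expression in `e₂, e₃`. -/

lemma hasDerivAt_two_mul_sinh_half (t : ℝ) :
    HasDerivAt (fun t : ℝ => 2 * sinh (t / 2)) (cosh (t / 2)) t :=
  (((hasDerivAt_id' t).div_const 2).sinh.const_mul 2).congr_deriv (by ring)

lemma hasDerivAt_cosh_half (t : ℝ) :
    HasDerivAt (fun t : ℝ => cosh (t / 2)) (sinh (t / 2) / 2) t :=
  ((hasDerivAt_id' t).div_const 2).cosh.congr_deriv (by ring)

lemma sinh_eq_two_mul_sinh_half_mul_cosh_half (t : ℝ) :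
    sinh t = 2 * sinh (t / 2) * cosh (t / 2) := by
  rw [← sinh_two_mul, mul_div_cancel₀ t two_ne_zero]

section JacobiField

variable {E : Type*} [NormedAddCommGroup E] [InnerProductSpace ℝ E]

/-- For a unit vector `v`, the Jacobi field of `ℂH^n` that vanishes at `0` and has initial velocity
`w`, in a parallel frame in which `v` represents `Jγ̇`. The norm of `v` is not part of the
definition: `⟪w, v⟫ • v` stands for the component of `w` along `v`, as it is when `‖v‖ = 1`. -/
noncomputable def jacobiField (v w : E) (t : ℝ) : E :=
  sinh t • ⟪w, v⟫ • v + (2 * sinh (t / 2)) • (w - ⟪w, v⟫ • v)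

lemma jacobiField_zero (v w : E) : jacobiField v w 0 = 0 := by
  simp [jacobiField]

lemma deriv_jacobiField (v w : E) :
    deriv (jacobiField v w) =
      fun t => cosh t • ⟪w, v⟫ • v + cosh (t / 2) • (w - ⟪w, v⟫ • v) :=
  deriv_eq fun t =>
    ((hasDerivAt_sinh t).smul_const _).add ((hasDerivAt_two_mul_sinh_half t).smul_const _)

lemma deriv_jacobiField_zero (v w : E) : deriv (jacobiField v w) 0 = w := by
  simp [deriv_jacobiField]

lemma deriv_deriv_jacobiField (v w : E) :
    deriv (deriv (jacobiField v w)) =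
      fun t => sinh t • ⟪w, v⟫ • v + (sinh (t / 2) / 2) • (w - ⟪w, v⟫ • v) := by
  rw [deriv_jacobiField]
  exact deriv_eq fun t =>
    ((hasDerivAt_cosh t).smul_const _).add ((hasDerivAt_cosh_half t).smul_const _)

lemma inner_jacobiField_left {v : E} (hv : ‖v‖ = 1) (w : E) (t : ℝ) :
    ⟪jacobiField v w t, v⟫ = sinh t * ⟪w, v⟫ := by
  have hvv : ⟪v, v⟫ = 1 := inner_self_eq_one_of_norm_eq_one hv
  simp only [jacobiField, inner_add_left, inner_sub_left, real_inner_smul_left, hvv]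
  ring

theorem jacobiField_jacobi_equation {v : E} (hv : ‖v‖ = 1) (w : E) (t : ℝ) :
    (4 : ℝ) • deriv (deriv (jacobiField v w)) t - jacobiField v w t
      - (3 : ℝ) • ⟪jacobiField v w t, v⟫ • v = 0 := by
  rw [inner_jacobiField_left hv, deriv_deriv_jacobiField, jacobiField]
  module

end JacobiField

section OrthonormalPair

variable {E : Type*} [NormedAddCommGroup E] [InnerProductSpace ℝ E] {e₂ e₃ : E}

lemma norm_sin_smul_add_cos_smul (h2 : ‖e₂‖ = 1) (h3 : ‖e₃‖ = 1) (h23 : ⟪e₂, e₃⟫ = 0) (φ : ℝ) :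
    ‖sin φ • e₂ + cos φ • e₃‖ = 1 := by
  have horth : ⟪sin φ • e₂, cos φ • e₃⟫ = 0 := by
    rw [real_inner_smul_left, real_inner_smul_right, h23, mul_zero, mul_zero]
  rw [← sq_eq_sq₀ (norm_nonneg _) zero_le_one, sq,
    norm_add_sq_eq_norm_sq_add_norm_sq_real horth]
  simp [norm_smul, h2, h3, ← sq]

lemma inner_sin_smul_add_cos_smul_right (h3 : ‖e₃‖ = 1) (h23 : ⟪e₂, e₃⟫ = 0) (φ : ℝ) :
    ⟪e₃, sin φ • e₂ + cos φ • e₃⟫ = cos φ := by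
  simp [inner_add_right, real_inner_smul_right, real_inner_comm e₂ e₃, h23, h3]

lemma jacobiField_sin_smul_add_cos_smul (h3 : ‖e₃‖ = 1) (h23 : ⟪e₂, e₃⟫ = 0) (φ t : ℝ) :
    jacobiField (sin φ • e₂ + cos φ • e₃) e₃ t =
      (2 * sin φ * cos φ * (cosh (t / 2) - 1) * sinh (t / 2)) • e₂
        + (2 * (1 + cos φ ^ 2 * (cosh (t / 2) - 1)) * sinh (t / 2)) • e₃ := by
  rw [jacobiField, inner_sin_smul_add_cos_smul_right h3 h23,
    sinh_eq_two_mul_sinh_half_mul_cosh_half t]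
  module

theorem jacobi_field_F_general (h2 : ‖e₂‖ = 1) (h3 : ‖e₃‖ = 1) (h23 : ⟪e₂, e₃⟫ = 0)
    {φ : ℝ} {v : E} (hv : v = sin φ • e₂ + cos φ • e₃) {ζ : ℝ → E}
    (hζ : ∀ t, ζ t = (2 * sin φ * cos φ * (cosh (t / 2) - 1) * sinh (t / 2)) • e₂
      + (2 * (1 + cos φ ^ 2 * (cosh (t / 2) - 1)) * sinh (t / 2)) • e₃) :
    (∀ t : ℝ, (4 : ℝ) • deriv (deriv ζ) t - ζ t - (3 : ℝ) • ⟪ζ t, v⟫ • v = 0) ∧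
    ζ 0 = 0 ∧ deriv ζ 0 = e₃ := by
  have hv_norm : ‖v‖ = 1 := hv ▸ norm_sin_smul_add_cos_smul h2 h3 h23 φ
  obtain rfl : ζ = jacobiField v e₃ := by
    funext t
    rw [hζ, hv, jacobiField_sin_smul_add_cos_smul h3 h23]
  exact ⟨jacobiField_jacobi_equation hv_norm e₃, jacobiField_zero v e₃, deriv_jacobiField_zero v e₃⟩

end OrthonormalPair

/-- let `e₁, e₂, e₃` be orthonormal vectors in `E`, `φ ∈ (0,π/2)`,
and `v = sin φ e₂ + cos φ e₃`. Then
`ζ(t) = 2 sin φ cos φ (cosh(t/2) − 1) sinh(t/2) e₂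
+ 2(1 + cos²φ(cosh(t/2) − 1)) sinh(t/2) e₃` satisfies the Jacobi equation
`4ζ''(t) − ζ(t) − 3⟨ζ(t),v⟩v = 0` for all `t ∈ ℝ`, with `ζ(0) = 0` and
`ζ'(0) = e₃`. (This is the Jacobi field `ζ_{F̄ξ}` along a normal geodesic to
`W_w`, in the parallel frame `(Z, P̄ξ, F̄ξ)`, `v` representing `Jξ`.) -/
theorem jacobi_field_F (E : Type*) [NormedAddCommGroup E]
    [InnerProductSpace ℝ E] (e₁ e₂ e₃ : E)
    (h1 : ‖e₁‖ = 1) (h2 : ‖e₂‖ = 1) (h3 : ‖e₃‖ = 1)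
    (h12 : ⟪e₁, e₂⟫ = 0) (h13 : ⟪e₁, e₃⟫ = 0) (h23 : ⟪e₂, e₃⟫ = 0)
    (φ : ℝ) (hφ : φ ∈ Set.Ioo 0 (π / 2)) (v : E)
    (hv : v = sin φ • e₂ + cos φ • e₃) (ζ : ℝ → E)
    (hζ : ∀ t, ζ t = (2 * sin φ * cos φ * (cosh (t / 2) - 1) * sinh (t / 2)) • e₂
      + (2 * (1 + cos φ ^ 2 * (cosh (t / 2) - 1)) * sinh (t / 2)) • e₃) :
    (∀ t : ℝ, (4 : ℝ) • deriv (deriv ζ) t - ζ t - (3 : ℝ) • ⟪ζ t, v⟫ • v = 0) ∧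
    ζ 0 = 0 ∧ deriv ζ 0 = e₃ :=
  jacobi_field_F_general h2 h3 h23 hv hζ
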